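/- Let k ≥ 1, δ ≥ 2, n ≥ (δ² + kδ + 7δ + 6k + 9)(δ² + kδ + 1), and let G ∈ 𝓑₂(n,k,δ). Let h be a positive eigenvector of Q(G) for the eigenvalue q(G), and suppose q(G) > 2(n − δ − k − 1) − 1. Set Z₁ = {i ∈ Z : d_G(i) = n−δ−k−1} and Z₂ = {i ∈ Z : d_G(i) ≤ n−δ−k−2}. If Z₂ ≠ ∅, then h_i > h_j for all i ∈ Z₁ and all j ∈ Z₂. -/

import Mathlib

open Finset Matrix

/-- The signless Laplacian matrix `Q(G) = D(G) + A(G)` of a graph. -/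
noncomputable def signlessLaplacian {V : Type*} [Fintype V] [DecidableEq V]
    (G : SimpleGraph V) [DecidableRel G.Adj] : Matrix V V ℝ :=
  Matrix.diagonal (fun v => (G.degree v : ℝ)) + G.adjMatrix ℝ

/-- The Q-index (largest eigenvalue of the signless Laplacian). -/
noncomputable def qIndex {V : Type*} [Fintype V] [DecidableEq V]
    (G : SimpleGraph V) [DecidableRel G.Adj] : ℝ :=
  sSup {μ : ℝ | ∃ x : V → ℝ, x ≠ 0 ∧ signlessLaplacian G *ᵥ x = μ • x}

/-- The adjacency spectral radius (largest eigenvalue of the adjacency matrix). -/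
noncomputable def adjSpecRad {V : Type*} [Fintype V] [DecidableEq V]
    (G : SimpleGraph V) [DecidableRel G.Adj] : ℝ :=
  sSup {μ : ℝ | ∃ x : V → ℝ, x ≠ 0 ∧ G.adjMatrix ℝ *ᵥ x = μ • x}

/-- A graph is `k`-path-coverable if its vertex set can be covered by at most `k`
vertex-disjoint paths. -/
def PathCoverable {V : Type*} (G : SimpleGraph V) (k : ℕ) : Prop :=
  ∃ (m : ℕ) (P : Fin m → Σ (u : V) (v : V), G.Walk u v),
    m ≤ k ∧
    (∀ i, (P i).2.2.IsPath) ∧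
    (∀ v : V, ∃ i, v ∈ (P i).2.2.support) ∧
    (∀ i j, i ≠ j → ∀ v, v ∈ (P i).2.2.support → v ∉ (P j).2.2.support)

/-- A graph is traceable if it has a Hamilton path. -/
def Traceable {V : Type*} (G : SimpleGraph V) : Prop :=
  ∃ (u v : V) (p : G.Walk u v), p.IsPath ∧ ∀ w, w ∈ p.support

/-- `B(n,k,δ) = K_δ ∨ (K_{n-2δ-k} ∪ complement K_{δ+k})`: the first `δ` vertices form the
dominating clique `Y`, the next `n-2δ-k` vertices form the clique `Z`, and the
last `δ+k` vertices form the independent set `X`. -/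
def Bgraph (n k δ : ℕ) : SimpleGraph (Fin n) where
  Adj i j := i ≠ j ∧ ((i : ℕ) < δ ∨ (j : ℕ) < δ ∨
      ((i : ℕ) < n - (δ + k) ∧ (j : ℕ) < n - (δ + k)))
  symm := by
    constructor
    rintro i j ⟨hne, h⟩
    exact ⟨hne.symm, by tauto⟩
  loopless := by
    constructor
    rintro i ⟨h, -⟩
    exact h rfl

instance (n k δ : ℕ) : DecidableRel (Bgraph n k δ).Adj := fun i j =>
  inferInstanceAs (Decidable (i ≠ j ∧ ((i : ℕ) < δ ∨ (j : ℕ) < δ ∨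
      ((i : ℕ) < n - (δ + k) ∧ (j : ℕ) < n - (δ + k)))))

instance {n : ℕ} (G : SimpleGraph (Fin n)) [DecidableRel G.Adj]
    (E' : Finset (Sym2 (Fin n))) : DecidableRel (G.deleteEdges ↑E').Adj := fun a b =>
  decidable_of_iff (G.Adj a b ∧ s(a, b) ∉ E') (by simp)

/-- The edge set `E₁` of `B(n,k,δ)`: edges with both endpoints in `Y ∪ Z`. -/
def IsE1Edge (n k δ : ℕ) (e : Sym2 (Fin n)) : Prop :=
  e ∈ (Bgraph n k δ).edgeSet ∧ ∀ v ∈ e, (v : ℕ) < n - (δ + k)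

/-- The family `𝓑₁(n,k,δ)`, up to isomorphism. -/
def InB1 (n k δ : ℕ) (G : SimpleGraph (Fin n)) : Prop :=
  ∃ E' : Finset (Sym2 (Fin n)),
    (∀ e ∈ E', IsE1Edge n k δ e) ∧ E'.card ≤ δ * (δ + k) / 4 ∧
    Nonempty (G ≃g (Bgraph n k δ).deleteEdges ↑E')

/-- The family `𝓑₂(n,k,δ)`, up to isomorphism. -/
def InB2 (n k δ : ℕ) (G : SimpleGraph (Fin n)) : Prop :=
  ∃ E' : Finset (Sym2 (Fin n)),
    (∀ e ∈ E', IsE1Edge n k δ e) ∧ E'.card = δ * (δ + k) / 4 + 1 ∧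
    Nonempty (G ≃g (Bgraph n k δ).deleteEdges ↑E')

/-!
The eigenvalue equation at `v` says that `(μ - d(v) + 1) * h v` is the sum of `h` over the closed
neighbourhood of `v`. For `h ≥ 0` this sum grows with the closed neighbourhood while the factor
`μ - d(v) + 1` shrinks, so if `N[j] ⊂ N[i]` then `h j < h i`. A vertex of `Z` has its closed
neighbourhood inside `Y ∪ Z`, and those of `Z₁` are exactly the ones for which it is all of `Y ∪ Z`.
-/

section SignlessLaplacian

variable {V : Type*} [Fintype V] [DecidableEq V] {G : SimpleGraph V} [DecidableRel G.Adj]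
  {μ : ℝ} {h : V → ℝ}

lemma signlessLaplacian_mulVec_apply (G : SimpleGraph V) [DecidableRel G.Adj] (h : V → ℝ) (v : V) :
    (signlessLaplacian G *ᵥ h) v = G.degree v * h v + ∑ u ∈ G.neighborFinset v, h u := by
  rw [signlessLaplacian, add_mulVec, Pi.add_apply, mulVec_diagonal,
    SimpleGraph.adjMatrix_mulVec_apply]

lemma sub_degree_add_one_mul_eq_sum_insert_neighborFinset
    (heig : signlessLaplacian G *ᵥ h = μ • h) (v : V) :
    (μ - G.degree v + 1) * h v = ∑ u ∈ insert v (G.neighborFinset v), h u := by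
  have hv : G.degree v * h v + ∑ u ∈ G.neighborFinset v, h u = μ * h v := by
    rw [← signlessLaplacian_mulVec_apply, heig, Pi.smul_apply, smul_eq_mul]
  rw [sum_insert (G.notMem_neighborFinset_self v)]
  linarith

lemma card_insert_neighborFinset (G : SimpleGraph V) [DecidableRel G.Adj] (v : V) :
    #(insert v (G.neighborFinset v)) = G.degree v + 1 := by
  rw [card_insert_of_notMem (G.notMem_neighborFinset_self v),
    SimpleGraph.card_neighborFinset_eq_degree]

lemma degree_lt_degree_of_insert_neighborFinset_ssubset {i j : V}
    (hji : insert j (G.neighborFinset j) ⊂ insert i (G.neighborFinset i)) :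
    G.degree j < G.degree i := by
  simpa only [card_insert_neighborFinset, add_lt_add_iff_right] using card_lt_card hji

theorem eigenvector_lt_of_insert_neighborFinset_ssubset
    (heig : signlessLaplacian G *ᵥ h = μ • h) (h_nonneg : 0 ≤ h) {i j : V} (hj : 0 < h j)
    (hji : insert j (G.neighborFinset j) ⊂ insert i (G.neighborFinset i)) :
    h j < h i := by
  have hdeg : (G.degree j : ℝ) < G.degree i :=
    Nat.cast_lt.2 (degree_lt_degree_of_insert_neighborFinset_ssubset hji)
  have hsum_pos : 0 < ∑ u ∈ insert j (G.neighborFinset j), h u :=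
    sum_pos' (fun u _ => h_nonneg u) ⟨j, mem_insert_self _ _, hj⟩
  have hsum_le : ∑ u ∈ insert j (G.neighborFinset j), h u ≤
      ∑ u ∈ insert i (G.neighborFinset i), h u :=
    sum_le_sum_of_subset_of_nonneg hji.subset fun u _ _ => h_nonneg u
  simp only [← sub_degree_add_one_mul_eq_sum_insert_neighborFinset heig] at hsum_pos hsum_le
  have hfactor : 0 < μ - G.degree i + 1 :=
    pos_of_mul_pos_left (hsum_pos.trans_le hsum_le) (h_nonneg i)
  refine lt_of_mul_lt_mul_left ?_ hfactor.le
  calc (μ - G.degree i + 1) * h j < (μ - G.degree j + 1) * h j := by gcongr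
    _ ≤ (μ - G.degree i + 1) * h i := hsum_le

end SignlessLaplacian

section Bgraph

variable {n k δ : ℕ} {G : SimpleGraph (Fin n)} [DecidableRel G.Adj]

lemma insert_neighborFinset_subset_of_le_Bgraph (hG : G ≤ Bgraph n k δ) {v : Fin n}
    (hδv : δ ≤ (v : ℕ)) (hv : (v : ℕ) < n - (δ + k)) :
    insert v (G.neighborFinset v) ⊆ ({u : Fin n | (u : ℕ) < n - (δ + k)} : Finset (Fin n)) := by
  intro u hu
  rw [mem_filter_univ]
  rcases mem_insert.1 hu with rfl | hvu
  · exact hv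
  · have hadj := (hG ((G.mem_neighborFinset v u).1 hvu)).2
    omega

lemma insert_neighborFinset_eq_of_le_Bgraph (hG : G ≤ Bgraph n k δ) {v : Fin n}
    (hδv : δ ≤ (v : ℕ)) (hv : (v : ℕ) < n - (δ + k)) (hdeg : G.degree v = n - δ - k - 1) :
    insert v (G.neighborFinset v) = ({u : Fin n | (u : ℕ) < n - (δ + k)} : Finset (Fin n)) := by
  refine eq_of_subset_of_card_le (insert_neighborFinset_subset_of_le_Bgraph hG hδv hv) ?_
  rw [Fin.card_filter_val_lt, card_insert_neighborFinset, hdeg]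
  omega

theorem eigenvector_Z1_gt_Z2_general (hG : G ≤ Bgraph n k δ) {μ : ℝ} {h : Fin n → ℝ}
    (heig : signlessLaplacian G *ᵥ h = μ • h) (h_nonneg : 0 ≤ h) {i j : Fin n}
    (hδi : δ ≤ (i : ℕ)) (hi : (i : ℕ) < n - (δ + k)) (hdi : G.degree i = n - δ - k - 1)
    (hδj : δ ≤ (j : ℕ)) (hj : (j : ℕ) < n - (δ + k))
    (hdj : G.degree j < n - δ - k - 1) (hj_pos : 0 < h j) :
    h j < h i := by
  refine eigenvector_lt_of_insert_neighborFinset_ssubset heig h_nonneg hj_pos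
    (ssubset_of_subset_of_ne ?_ fun heq => ?_)
  · rw [insert_neighborFinset_eq_of_le_Bgraph hG hδi hi hdi]
    exact insert_neighborFinset_subset_of_le_Bgraph hG hδj hj
  · have hcard := congrArg card heq
    simp only [card_insert_neighborFinset] at hcard
    omega

end Bgraph

/-- **Lemma 3.5 (2)**: for `G ∈ 𝓑₂(n,k,δ)` and a positive `q(G)`-eigenvector `h`, with
`q(G) > 2(n-δ-k-1) - 1`: if `Z₂ ≠ ∅`, then `h i > h j` for all `i ∈ Z₁` and `j ∈ Z₂`. -/
theorem eigenvector_Z1_gt_Z2 (k δ n : ℕ) (hk : 1 ≤ k) (hδ : 2 ≤ δ)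
    (hn : (δ ^ 2 + k * δ + 7 * δ + 6 * k + 9) * (δ ^ 2 + k * δ + 1) ≤ n)
    (E' : Finset (Sym2 (Fin n))) (hE : ∀ e ∈ E', IsE1Edge n k δ e)
    (hcard : E'.card = δ * (δ + k) / 4 + 1)
    (G : SimpleGraph (Fin n)) [DecidableRel G.Adj]
    (hG : G = (Bgraph n k δ).deleteEdges ↑E')
    (h : Fin n → ℝ) (hpos : ∀ v, 0 < h v)
    (heig : signlessLaplacian G *ᵥ h = qIndex G • h)
    (hq : 2 * ((n : ℝ) - δ - k - 1) - 1 < qIndex G)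
    (hZ2 : ∃ j : Fin n, δ ≤ (j : ℕ) ∧ (j : ℕ) < n - (δ + k) ∧
        G.degree j ≤ n - δ - k - 2) :
    ∀ i j : Fin n,
      δ ≤ (i : ℕ) → (i : ℕ) < n - (δ + k) → G.degree i = n - δ - k - 1 →
      δ ≤ (j : ℕ) → (j : ℕ) < n - (δ + k) → G.degree j ≤ n - δ - k - 2 →
      h j < h i := by
  intro i j hδi hi hdi hδj hj hdj
  exact eigenvector_Z1_gt_Z2_general (hG.trans_le (SimpleGraph.deleteEdges_le _)) heig
    (fun v => (hpos v).le) hδi hi hdi hδj hj (by omega) (hpos j)
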